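/- For every integer d ≥ 1 and every real x, g_d(x) = p_d·∫_0^x (1 − t²)^d dt. -/

import Mathlib

noncomputable def g (d : ℕ) : ℝ → ℝ :=
  fun m => ∑ i ∈ Finset.range (d + 1),
    (1 / 4 ^ i : ℝ) * (Nat.choose (2 * i) i) * (m * (1 - m ^ 2) ^ i)

noncomputable def p (d : ℕ) : ℝ :=
  ∑ i ∈ Finset.range (d + 1), (1 / 4 ^ i : ℝ) * (Nat.choose (2 * i) i)

lemma coef_rec (n : ℕ) :
    2 * ((n : ℝ) + 1) * ((1 / 4 ^ (n + 1) : ℝ) * (Nat.choose (2 * (n + 1)) (n + 1)))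
      = (2 * n + 1) * ((1 / 4 ^ n : ℝ) * (Nat.choose (2 * n) n)) := by
  have h := Nat.succ_mul_centralBinom_succ n
  simp only [Nat.centralBinom] at h
  have h2 : ((n : ℝ) + 1) * (Nat.choose (2 * (n + 1)) (n + 1))
      = 2 * (2 * n + 1) * (Nat.choose (2 * n) n) := by exact_mod_cast h
  have h4 : (1 / 4 ^ (n + 1) : ℝ) = (1 / 4 ^ n) / 4 := by
    rw [pow_succ]; field_simp
  rw [h4]
  linear_combination (1 / 4 ^ n : ℝ) / 2 * h2

lemma p_eq (d : ℕ) : p d = (2 * d + 1) * ((1 / 4 ^ d : ℝ) * (Nat.choose (2 * d) d)) := by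
  induction d with
  | zero => simp [p]
  | succ n ih =>
    have h : p (n + 1) = p n + (1 / 4 ^ (n + 1) : ℝ) * (Nat.choose (2 * (n + 1)) (n + 1)) := by
      simp only [p]; rw [Finset.sum_range_succ]
    rw [h, ih, ← coef_rec]
    push_cast
    ring

lemma g_deriv (d : ℕ) (x : ℝ) : HasDerivAt (g d) (p d * (1 - x ^ 2) ^ d) x := by
  induction d with
  | zero =>
    have : g 0 = fun m => m := by funext m; simp [g]
    rw [this]
    simpa [p] using hasDerivAt_id' x
  | succ n ih =>
    have h : g (n + 1) = fun m => g n m + (1 / 4 ^ (n + 1) : ℝ) *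
        (Nat.choose (2 * (n + 1)) (n + 1)) * (m * (1 - m ^ 2) ^ (n + 1)) := by
      funext m
      simp only [g]; rw [Finset.sum_range_succ]
    rw [h]
    have h1 : HasDerivAt (fun m : ℝ => (1 - m ^ 2) ^ (n + 1))
        (((n + 1 : ℕ) : ℝ) * (1 - x ^ 2) ^ n * (-(2 * x))) x := by
      have := (((hasDerivAt_id' x).fun_pow 2).const_sub 1).fun_pow (n + 1)
      simpa using this
    have h2 := ih.fun_add (((hasDerivAt_id' x).fun_mul h1).const_mul
      ((1 / 4 ^ (n + 1) : ℝ) * (Nat.choose (2 * (n + 1)) (n + 1))))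
    refine h2.congr_deriv ?_
    rw [p_eq n, p_eq (n + 1), ← coef_rec]
    push_cast
    ring

theorem stmt_2 (d : ℕ) (hd : 1 ≤ d) (x : ℝ) :
    g d x = p d * ∫ t in (0 : ℝ)..x, (1 - t ^ 2) ^ d := by
  rw [← intervalIntegral.integral_const_mul,
    intervalIntegral.integral_eq_sub_of_hasDerivAt (fun t _ => g_deriv d t)
      (Continuous.intervalIntegrable (by fun_prop) _ _)]
  simp [g]
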